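/- Let Γ be a group acting on compact metric spaces X and Y such that every γ ∈ Γ acts on X as a Lipschitz homeomorphism and on Y as a Lipschitz homeomorphism, and assume every Γ-orbit in X is dense in X. Let f : X → Y be a homeomorphism with f(γ·x) = γ·f(x) for all γ ∈ Γ and x ∈ X. Let κ > 0 and suppose there exist a nonempty open set U ⊆ X and C ≥ 1 such that C⁻¹·d(x,y)^κ ≤ d(f(x),f(y)) ≤ C·d(x,y)^κ for all x, y ∈ U. Then there exists C' ≥ 1 such that C'⁻¹·d(x,y)^κ ≤ d(f(x),f(y)) ≤ C'·d(x,y)^κ for all x, y ∈ X. -/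

import Mathlib

open Metric Filter Topology

/-!
On `X × X` the functions `dist (f x) (f y)` and `dist x y ^ κ` are continuous, they vanish exactly
on the diagonal, and each element of `Γ` distorts them by at most a bounded factor. Near a pair
off the diagonal their ratio is continuous and nonzero, hence bounded above and below. A diagonal
pair `(x, x)` is carried by some `γ` into `U ×ˢ U`, where the two functions are comparable, and the
comparison is transported back by `γ⁻¹`. Compactness of `X × X` makes the constants uniform.
-/

open Asymptotics Set

section LocalToGlobal

variable {Z : Type*} [TopologicalSpace Z]

theorem isBigO_top_of_forall_nhds [CompactSpace Z] {E F : Type*} [Norm E]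
    [SeminormedAddCommGroup F] {a : Z → E} {b : Z → F} (h : ∀ z, a =O[𝓝 z] b) : a =O[⊤] b := by
  rw [← principal_univ]
  refine isCompact_univ.induction_on (p := fun s ↦ a =O[𝓟 s] b) ?_ ?_ ?_ ?_
  · simp only [principal_empty, isBigO_bot]
  · exact fun s t hst ht ↦ ht.mono (principal_mono.2 hst)
  · intro s t hs ht
    simpa only [sup_principal] using hs.sup ht
  · intro z _
    obtain ⟨K, hK⟩ := (h z).bound
    exact ⟨_, mem_nhdsWithin_of_mem_nhds hK, isBigO_principal.2 ⟨K, fun w hw ↦ hw⟩⟩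

theorem isTheta_top_of_forall_nhds [CompactSpace Z] {E F : Type*} [SeminormedAddCommGroup E]
    [SeminormedAddCommGroup F] {a : Z → E} {b : Z → F} (h : ∀ z, a =Θ[𝓝 z] b) : a =Θ[⊤] b :=
  ⟨isBigO_top_of_forall_nhds fun z ↦ (h z).isBigO,
    isBigO_top_of_forall_nhds fun z ↦ (h z).isBigO_symm⟩

theorem isTheta_nhds_of_continuousAt_of_ne_zero {𝕜 : Type*} [NormedField 𝕜] {a b : Z → 𝕜} {z : Z}
    (ha : ContinuousAt a z) (hb : ContinuousAt b z) (haz : a z ≠ 0) (hbz : b z ≠ 0) :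
    a =Θ[𝓝 z] b :=
  isTheta_of_div_tendsto_nhds_ne_zero (hb.div ha haz) (div_ne_zero hbz haz)

end LocalToGlobal

/-- Quasi-invariance of `a` under an action of `Γ`: each `γ : Γ` increases `|a|` by at most a
factor depending on `γ` alone. For a group action, `γ⁻¹` gives the matching lower bound.
A Lipschitz action is one for which the distance is quasi-invariant on pairs. -/
def QuasiInvariant (Γ : Type*) {Z : Type*} [SMul Γ Z] (a : Z → ℝ) : Prop :=
  ∀ γ : Γ, (fun z ↦ a (γ • z)) =O[⊤] a

namespace QuasiInvariant

variable {Γ Z W : Type*} {a b : Z → ℝ}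

theorem comp_equivariant [SMul Γ Z] [SMul Γ W] (ha : QuasiInvariant Γ a) {φ : W → Z}
    (hφ : ∀ (γ : Γ) (w : W), φ (γ • w) = γ • φ w) : QuasiInvariant Γ (a ∘ φ) := fun γ ↦ by
  simpa only [Function.comp_def, hφ] using (ha γ).comp_tendsto (tendsto_top : Tendsto φ ⊤ ⊤)

theorem rpow [SMul Γ Z] (ha : QuasiInvariant Γ a) (ha₀ : 0 ≤ a) {κ : ℝ} (hκ : 0 ≤ κ) :
    QuasiInvariant Γ fun z ↦ a z ^ κ :=
  fun γ ↦ (ha γ).rpow hκ (Eventually.of_forall ha₀)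

variable [Group Γ] [MulAction Γ Z]

theorem isTheta (ha : QuasiInvariant Γ a) (γ : Γ) : (fun z ↦ a (γ • z)) =Θ[⊤] a := by
  have hinv : (fun z ↦ a (γ⁻¹ • γ • z)) =O[⊤] fun z ↦ a (γ • z) :=
    (ha γ⁻¹).comp_tendsto (tendsto_top : Tendsto (fun z ↦ γ • z) ⊤ ⊤)
  exact ⟨ha γ, by simpa only [inv_smul_smul] using hinv⟩

variable [TopologicalSpace Z] [ContinuousConstSMul Γ Z] {V : Set Z}

theorem isTheta_nhds_of_smul_mem (ha : QuasiInvariant Γ a) (hb : QuasiInvariant Γ b)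
    (hV : IsOpen V) (hab : a =Θ[𝓟 V] b) {γ : Γ} {z : Z} (hz : γ • z ∈ V) : a =Θ[𝓝 z] b := by
  have hγ : Tendsto (fun w ↦ γ • w) (𝓝 z) (𝓟 V) :=
    tendsto_principal.2 ((continuous_const_smul γ).continuousAt (hV.mem_nhds hz))
  have hab' : (fun w ↦ a (γ • w)) =Θ[𝓝 z] fun w ↦ b (γ • w) :=
    ⟨hab.isBigO.comp_tendsto hγ, hab.isBigO_symm.comp_tendsto hγ⟩
  exact ((ha.isTheta γ).symm.mono le_top).trans (hab'.trans ((hb.isTheta γ).mono le_top))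

theorem isTheta_top_of_isTheta_principal [CompactSpace Z] (ha : QuasiInvariant Γ a)
    (hb : QuasiInvariant Γ b) (ha_cont : Continuous a) (hb_cont : Continuous b) (hV : IsOpen V)
    (hab : a =Θ[𝓟 V] b) (hzero : ∀ z, a z = 0 ∨ b z = 0 → ∃ γ : Γ, γ • z ∈ V) :
    a =Θ[⊤] b := by
  refine isTheta_top_of_forall_nhds fun z ↦ ?_
  by_cases hz : a z = 0 ∨ b z = 0
  · obtain ⟨γ, hγ⟩ := hzero z hz
    exact ha.isTheta_nhds_of_smul_mem hb hV hab hγ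
  · obtain ⟨haz, hbz⟩ := not_or.1 hz
    exact isTheta_nhds_of_continuousAt_of_ne_zero ha_cont.continuousAt hb_cont.continuousAt haz hbz

end QuasiInvariant

theorem quasiInvariant_dist {Γ X : Type*} [PseudoMetricSpace X] [SMul Γ X]
    (hLip : ∀ γ : Γ, ∃ L : NNReal, LipschitzWith L (fun x : X ↦ γ • x)) :
    QuasiInvariant Γ fun p : X × X ↦ dist p.1 p.2 := fun γ ↦ by
  obtain ⟨L, hL⟩ := hLip γ
  refine isBigO_top.2 ⟨L, fun p ↦ ?_⟩
  simpa only [Real.norm_of_nonneg dist_nonneg, Prod.smul_fst, Prod.smul_snd] using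
    hL.dist_le_mul p.1 p.2

theorem continuousConstSMul_of_lipschitzWith {Γ X : Type*} [PseudoEMetricSpace X] [SMul Γ X]
    (hLip : ∀ γ : Γ, ∃ L : NNReal, LipschitzWith L (fun x : X ↦ γ • x)) :
    ContinuousConstSMul Γ X :=
  ⟨fun γ ↦ (hLip γ).elim fun _ hL ↦ hL.continuous⟩

theorem continuous_of_equivariant_of_continuousOn {Γ X Y : Type*} [Group Γ] [TopologicalSpace X]
    [TopologicalSpace Y] [MulAction Γ X] [MulAction Γ Y] [ContinuousConstSMul Γ X]
    [ContinuousConstSMul Γ Y] {f : X → Y} (hequiv : ∀ (γ : Γ) (x : X), f (γ • x) = γ • f x)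
    {U : Set X} (hUopen : IsOpen U) (hU : ∀ x, ∃ γ : Γ, γ • x ∈ U) (hf : ContinuousOn f U) :
    Continuous f := by
  refine continuous_iff_continuousAt.2 fun x ↦ ?_
  obtain ⟨γ, hγ⟩ := hU x
  have hcomp : ContinuousAt (fun y ↦ f (γ • y)) x :=
    (hf.continuousAt (hUopen.mem_nhds hγ)).comp (continuous_const_smul γ).continuousAt
  simpa only [hequiv, Pi.smul_def, inv_smul_smul] using hcomp.const_smul γ⁻¹

/-- `f` is `κ`-bi-Hölder on `s`. The inequalities are stated with real powers of real-valued
distances, so that one real constant `C ≥ 1` serves in both. -/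
def BiHolderOn {X Y : Type*} [PseudoMetricSpace X] [PseudoMetricSpace Y] (κ : ℝ) (f : X → Y)
    (s : Set X) : Prop :=
  ∃ C : ℝ, 1 ≤ C ∧ ∀ x ∈ s, ∀ y ∈ s,
    C⁻¹ * dist x y ^ κ ≤ dist (f x) (f y) ∧ dist (f x) (f y) ≤ C * dist x y ^ κ

section BiHolder

variable {X Y : Type*} [PseudoMetricSpace X] [PseudoMetricSpace Y] {κ : ℝ} {f : X → Y} {s : Set X}

theorem biHolderOn_iff_isTheta : BiHolderOn κ f s ↔
    (fun p : X × X ↦ dist (f p.1) (f p.2)) =Θ[𝓟 (s ×ˢ s)] fun p ↦ dist p.1 p.2 ^ κ := by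
  have hnorm (x y : X) : ‖dist x y ^ κ‖ = dist x y ^ κ :=
    Real.norm_of_nonneg (Real.rpow_nonneg dist_nonneg κ)
  simp only [IsTheta, isBigO_principal, hnorm, Real.norm_of_nonneg dist_nonneg, Prod.forall,
    mem_prod, and_imp]
  constructor
  · rintro ⟨C, hC, h⟩
    exact ⟨⟨C, fun x y hx hy ↦ (h x hx y hy).2⟩,
      ⟨C, fun x y hx hy ↦ (inv_mul_le_iff₀ (by positivity)).1 (h x hx y hy).1⟩⟩
  · rintro ⟨⟨K, hK⟩, L, hL⟩
    refine ⟨max 1 (max K L), le_max_left _ _, fun x hx y hy ↦ ⟨?_, ?_⟩⟩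
    · rw [inv_mul_le_iff₀ (by positivity)]
      exact (hL x y hx hy).trans (by gcongr; simp)
    · exact (hK x y hx hy).trans (by gcongr; simp)

theorem BiHolderOn.continuousOn (hf : BiHolderOn κ f s) (hκ : 0 < κ) : ContinuousOn f s := by
  obtain ⟨C, -, h⟩ := hf
  intro x hx
  have hlim : Tendsto (fun y ↦ C * dist y x ^ κ) (𝓝[s] x) (𝓝 0) := by
    have hcont : Continuous fun y ↦ C * dist y x ^ κ := by fun_prop (disch := positivity)
    exact (hcont.tendsto' x 0 (by simp [hκ.ne'])).mono_left nhdsWithin_le_nhds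
  refine tendsto_iff_dist_tendsto_zero.2 (squeeze_zero' (.of_forall fun _ ↦ dist_nonneg) ?_ hlim)
  filter_upwards [self_mem_nhdsWithin] with y hy using (h y hy x hx).2

end BiHolder

theorem local_biHolder_implies_global_biHolder_general
    {Γ X Y : Type*} [Group Γ] [MetricSpace X] [CompactSpace X] [MetricSpace Y]
    [MulAction Γ X] [MulAction Γ Y]
    (hLipX : ∀ γ : Γ, ∃ L : NNReal, LipschitzWith L (fun x : X ↦ γ • x))
    (hLipY : ∀ γ : Γ, ∃ L : NNReal, LipschitzWith L (fun y : Y ↦ γ • y))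
    {f : X → Y} (hinj : Function.Injective f) (hequiv : ∀ (γ : Γ) (x : X), f (γ • x) = γ • f x)
    {κ : ℝ} (hκ : 0 < κ) {U : Set X} (hUopen : IsOpen U) (hU : ∀ x, ∃ γ : Γ, γ • x ∈ U)
    (hloc : BiHolderOn κ f U) : BiHolderOn κ f univ := by
  have := continuousConstSMul_of_lipschitzWith hLipX
  have := continuousConstSMul_of_lipschitzWith hLipY
  have hf : Continuous f :=
    continuous_of_equivariant_of_continuousOn hequiv hUopen hU (hloc.continuousOn hκ)
  have hdistX : QuasiInvariant Γ fun p : X × X ↦ dist p.1 p.2 ^ κ :=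
    (quasiInvariant_dist hLipX).rpow (fun _ ↦ dist_nonneg) hκ.le
  have hdistY : QuasiInvariant Γ fun p : X × X ↦ dist (f p.1) (f p.2) :=
    (quasiInvariant_dist hLipY).comp_equivariant (φ := Prod.map f f) fun γ p ↦
      Prod.ext (hequiv γ p.1) (hequiv γ p.2)
  have hdiag (p : X × X) (hp : dist (f p.1) (f p.2) = 0 ∨ dist p.1 p.2 ^ κ = 0) : p.1 = p.2 := by
    simpa [Real.rpow_eq_zero dist_nonneg hκ.ne', hinj.eq_iff] using hp
  rw [biHolderOn_iff_isTheta, univ_prod_univ, principal_univ]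
  refine hdistY.isTheta_top_of_isTheta_principal hdistX (by fun_prop)
    (continuous_dist.rpow_const fun _ ↦ .inr hκ.le) (hUopen.prod hUopen)
    (biHolderOn_iff_isTheta.1 hloc) fun p hp ↦ ?_
  obtain ⟨γ, hγ⟩ := hU p.1
  exact ⟨γ, hγ, by simpa only [Prod.smul_snd, hdiag p hp] using hγ⟩

theorem local_biHolder_implies_global_biHolder
    {Γ X Y : Type*} [Group Γ]
    [MetricSpace X] [CompactSpace X] [MetricSpace Y] [CompactSpace Y]
    [MulAction Γ X] [MulAction Γ Y]
    (hLipX : ∀ γ : Γ, ∃ L : NNReal, LipschitzWith L (fun x : X => γ • x))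
    (hLipY : ∀ γ : Γ, ∃ L : NNReal, LipschitzWith L (fun y : Y => γ • y))
    (hmin : ∀ x : X, Dense (MulAction.orbit Γ x : Set X))
    (f : X ≃ₜ Y) (hequiv : ∀ (γ : Γ) (x : X), f (γ • x) = γ • f x)
    (κ : ℝ) (hκ : 0 < κ)
    (U : Set X) (hUopen : IsOpen U) (hUne : U.Nonempty)
    (C : ℝ) (hC : 1 ≤ C)
    (hloc : ∀ x ∈ U, ∀ y ∈ U,
      C⁻¹ * dist x y ^ κ ≤ dist (f x) (f y) ∧ dist (f x) (f y) ≤ C * dist x y ^ κ) :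
    ∃ C' : ℝ, 1 ≤ C' ∧ ∀ x y : X,
      C'⁻¹ * dist x y ^ κ ≤ dist (f x) (f y) ∧ dist (f x) (f y) ≤ C' * dist x y ^ κ := by
  have : MulAction.IsMinimal Γ X := ⟨hmin⟩
  simpa only [BiHolderOn, mem_univ, forall_true_left] using
    local_biHolder_implies_global_biHolder_general hLipX hLipY f.injective hequiv hκ hUopen
      (fun x ↦ hUopen.exists_smul_mem Γ x hUne) ⟨C, hC, hloc⟩
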